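/- Let H be a finite type, let p and q be probability vectors on H, let S be a finite subset of H, and let δ, ε be reals with δ > 0, ∑_{h ∈ S} p h ≥ δ, ∑ h, |p h − q h| ≤ ε, and ε < δ. Then ∑_{h ∈ S} q h > 0, and the statistical distance between the conditional distributions on S satisfies ∑_{h ∈ S} |p h / (∑_{h' ∈ S} p h') − q h / (∑_{h' ∈ S} q h')| ≤ 2 * ε / δ. (In the paper this is the claim, used in the proof that sequential equilibria lift to computational sequential equilibria, that if two outcome distributions are statistically close and a conditioning event has probability bounded below, then the conditional distributions are correspondingly close.) -/

import Mathlib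

/-- If two probability vectors are statistically close and a conditioning event
has probability bounded below, the conditional distributions are close. -/
theorem conditional_statistical_distance_bound
    {H : Type*} [Fintype H] (p q : H → ℝ) (S : Finset H) (δ ε : ℝ)
    (hp0 : ∀ h, 0 ≤ p h) (hp1 : ∑ h, p h = 1)
    (hq0 : ∀ h, 0 ≤ q h) (hq1 : ∑ h, q h = 1)
    (hδ : 0 < δ) (hS : δ ≤ ∑ h ∈ S, p h)
    (hclose : ∑ h, |p h - q h| ≤ ε) (hεδ : ε < δ) :
    0 < ∑ h ∈ S, q h ∧
      ∑ h ∈ S, |p h / (∑ h' ∈ S, p h') - q h / (∑ h' ∈ S, q h')| ≤ 2 * ε / δ := by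
  have hE : ∑ h ∈ S, |p h - q h| ≤ ε :=
    (Finset.sum_le_sum_of_subset_of_nonneg (Finset.subset_univ S)
      (fun _ _ _ => abs_nonneg _)).trans hclose
  have hD : |(∑ h ∈ S, p h) - ∑ h ∈ S, q h| ≤ ε := by
    rw [← Finset.sum_sub_distrib]
    exact (Finset.abs_sum_le_sum_abs _ _).trans hE
  generalize hP : ∑ h ∈ S, p h = P at *
  generalize hQ : ∑ h ∈ S, q h = Q at *
  have hP0 : 0 < P := hδ.trans_le hS
  have hQ0 : 0 < Q := by linarith [(abs_le.mp hD).2]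
  have hε : 0 ≤ ε := (abs_nonneg _).trans hD
  refine ⟨hQ0, ?_⟩
  have key : ∀ h ∈ S, |p h / P - q h / Q| ≤ |p h - q h| / P + q h * (|P - Q| / (P * Q)) := by
    intro h _
    have e : p h / P - q h / Q = (p h - q h) / P + q h * (-(P - Q) / (P * Q)) := by
      field_simp
      ring
    rw [e]
    refine (abs_add_le _ _).trans (le_of_eq ?_)
    rw [abs_div, abs_mul, abs_div, abs_neg, abs_of_pos hP0, abs_of_nonneg (hq0 h),
      abs_of_pos (mul_pos hP0 hQ0)]
  refine (Finset.sum_le_sum key).trans ?_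
  rw [Finset.sum_add_distrib, ← Finset.sum_div, ← Finset.sum_mul, hQ]
  have e2 : Q * (|P - Q| / (P * Q)) = |P - Q| / P := by field_simp
  rw [e2, ← add_div]
  exact div_le_div₀ (by linarith) (by linarith) hδ hS
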